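/- Let R be a commutative Noetherian ring and let i : M → I be an injective envelope of R-modules. Then for every injective R-module E, the induced morphism Hom_R(i,E) : Hom_R(I,E) → Hom_R(M,E) is a flat cover. -/

import Mathlib

universe u

variable (R : Type u) [CommRing R]

/-- A morphism `f : F → M` with `F` flat is a flat precover if every morphism from a
flat module to `M` factors through `f`. -/
def IsFlatPrecover {F M : Type u} [AddCommGroup F] [AddCommGroup M] [Module R F]
    [Module R M] (f : F →ₗ[R] M) : Prop :=
  Module.Flat R F ∧
    ∀ (F' : Type u) [AddCommGroup F'] [Module R F'], Module.Flat R F' →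
      ∀ g : F' →ₗ[R] M, ∃ h : F' →ₗ[R] F, f ∘ₗ h = g

/-- A flat precover `f : F → M` is a flat cover if every `h : F → F` with `f ∘ h = f`
is an automorphism. -/
def IsFlatCover {F M : Type u} [AddCommGroup F] [AddCommGroup M] [Module R F]
    [Module R M] (f : F →ₗ[R] M) : Prop :=
  IsFlatPrecover R f ∧ ∀ h : F →ₗ[R] F, f ∘ₗ h = f → Function.Bijective h

/-- A morphism `i : M → E` is an injective envelope if `E` is injective, `i` is
injective, and the image of `i` is an essential submodule of `E`. -/
def IsInjectiveEnvelope {M E : Type u} [AddCommGroup M] [AddCommGroup E] [Module R M]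
    [Module R E] (i : M →ₗ[R] E) : Prop :=
  Module.Injective R E ∧ Function.Injective i ∧
    ∀ N : Submodule R E, N ≠ ⊥ → N ⊓ LinearMap.range i ≠ ⊥

/-- An injective cogenerator is an injective module `E` such that `Hom(N, E) ≠ 0`
for every nonzero module `N`. -/
def IsInjectiveCogenerator (E : Type u) [AddCommGroup E] [Module R E] : Prop :=
  Module.Injective R E ∧
    ∀ (N : Type u) [AddCommGroup N] [Module R N], (∃ x : N, x ≠ 0) →
      ∃ g : N →ₗ[R] E, g ≠ 0

/-- Factorization through injective modules. -/
theorem aux_factor {A B Q : Type u} [AddCommGroup A] [AddCommGroup B] [AddCommGroup Q]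
    [Module R A] [Module R B] [Module R Q] (hQ : Module.Injective R Q)
    (α : A →ₗ[R] B) (f : A →ₗ[R] Q) (h : ∀ x, α x = 0 → f x = 0) :
    ∃ β : B →ₗ[R] Q, ∀ x, β (α x) = f x := by
  have hk : LinearMap.ker α ≤ LinearMap.ker f := fun x hx => h x hx
  have hinj : Function.Injective ((LinearMap.ker α).liftQ α le_rfl) :=
    LinearMap.ker_eq_bot.1 (Submodule.ker_liftQ_eq_bot _ _ _ le_rfl)
  obtain ⟨β, hβ⟩ := hQ.out _ hinj ((LinearMap.ker α).liftQ f hk)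
  refine ⟨β, fun x => ?_⟩
  simpa using hβ (Submodule.Quotient.mk x)

theorem aux_flat [IsNoetherianRing R] {I E : Type u} [AddCommGroup I] [AddCommGroup E]
    [Module R I] [Module R E] (hI : Module.Injective R I) (hE : Module.Injective R E) :
    Module.Flat R (I →ₗ[R] E) := by
  apply Module.Flat.of_forall_isTrivialRelation
  intro l f x hx
  let F : (Fin l → R) →ₗ[R] R := ∑ i, f i • LinearMap.proj i
  have hF : ∀ v, F v = ∑ i, f i * v i := fun v => by simp [F]
  obtain ⟨m, k, hk⟩ := Submodule.fg_iff_exists_fin_generating_family.1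
    (IsNoetherian.noetherian (LinearMap.ker F))
  let α : (Fin l → I) →ₗ[R] (Fin m → I) :=
    LinearMap.pi fun j => ∑ i, k j i • LinearMap.proj i
  have hα : ∀ y j, α y j = ∑ i, k j i • y i := fun y j => by simp [α]
  let Φ : (Fin l → I) →ₗ[R] E := ∑ i, x i ∘ₗ LinearMap.proj i
  have hΦ : ∀ y, Φ y = ∑ i, x i (y i) := fun y => by simp [Φ]
  obtain ⟨β, hβ⟩ := aux_factor R hE α Φ (by
    intro y hy
    let G : (Fin l → R) →ₗ[R] I := ∑ i, (LinearMap.toSpanSingleton R I (y i)) ∘ₗ LinearMap.proj i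
    have hG : ∀ v, G v = ∑ i, v i • y i := fun v => by simp [G]
    obtain ⟨γ, hγ⟩ := aux_factor R hI F G (by
      intro v hv
      have hle : LinearMap.ker F ≤ LinearMap.ker G := by
        rw [← hk, Submodule.span_le]
        rintro _ ⟨j, rfl⟩
        have := congrFun hy j
        rw [hα] at this
        simpa [hG] using this
      exact hle hv)
    have hy' : ∀ i, y i = f i • γ 1 := by
      intro i
      have := hγ (Pi.single i 1)
      rw [hF, hG] at this
      simp only [Pi.single_apply, mul_ite, mul_one, mul_zero, ite_smul, one_smul, zero_smul,
        Finset.sum_ite_eq', Finset.mem_univ, if_true] at this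
      rw [← this, ← map_smul, smul_eq_mul, mul_one]
    have h0 := LinearMap.congr_fun hx (γ 1)
    simp only [LinearMap.sum_apply, LinearMap.smul_apply, LinearMap.zero_apply] at h0
    rw [hΦ, ← h0]
    refine Finset.sum_congr rfl fun i _ => ?_
    rw [hy' i, map_smul])
  refine ⟨m, fun i j => k j i, fun j => β ∘ₗ LinearMap.single R (fun _ => I) j, ?_, ?_⟩
  · intro i
    ext z
    have h1 := hβ (Pi.single i z)
    have h2 : α (Pi.single i z) = ∑ j, Pi.single j (k j i • z) := by
      ext j
      rw [hα, Finset.sum_apply]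
      simp [Pi.single_apply]
    have h3 : Φ (Pi.single i z) = x i z := by
      rw [hΦ, Finset.sum_eq_single i]
      · simp
      · intro b _ hb
        simp [Pi.single_eq_of_ne hb]
      · simp
    rw [h2, h3, map_sum] at h1
    rw [← h1, LinearMap.sum_apply]
    refine Finset.sum_congr rfl fun j _ => ?_
    simp [Pi.single_smul]
  · intro j
    have : k j ∈ LinearMap.ker F := by rw [← hk]; exact Submodule.subset_span ⟨j, rfl⟩
    rw [← hF]; exact this

/-- The submodule killed by an ideal. -/
def auxAnn {I : Type u} [AddCommGroup I] [Module R I] (J : Ideal R) : Submodule R I where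
  carrier := {x | ∀ r ∈ J, r • x = 0}
  add_mem' := by
    intro a b ha hb r hr
    rw [smul_add, ha r hr, hb r hr, add_zero]
  zero_mem' := by intro r _; simp
  smul_mem' := by
    intro c x hx r hr
    rw [smul_comm, hx r hr, smul_zero]

section
variable {I E : Type u} [AddCommGroup I] [AddCommGroup E] [Module R I] [Module R E]

theorem aux_ann_sup {J : Ideal R} {a : R} {x : I} (hx : x ∈ auxAnn R J) (ha : a • x = 0) :
    x ∈ auxAnn R (J ⊔ Ideal.span {a}) := by
  intro r hr
  obtain ⟨p, hp, q, hq, rfl⟩ := Submodule.mem_sup.1 hr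
  obtain ⟨c, rfl⟩ := Ideal.mem_span_singleton'.1 hq
  rw [add_smul, hx p hp, mul_smul, ha, smul_zero, zero_add]

theorem aux_ann_sup_left {J : Ideal R} {a : R} {x : I}
    (hx : x ∈ auxAnn R (J ⊔ Ideal.span {a})) : x ∈ auxAnn R J :=
  fun r hr => hx r (le_sup_left (a := J) hr)

theorem aux_ann_sup_right {J : Ideal R} {a : R} {x : I}
    (hx : x ∈ auxAnn R (J ⊔ Ideal.span {a})) : a • x = 0 :=
  hx a (le_sup_right (a := J) (Ideal.mem_span_singleton_self a))

theorem aux_lt_sup {J : Ideal R} {a : R} (ha : a ∉ J) : J < J ⊔ Ideal.span {a} :=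
  lt_of_le_of_ne le_sup_left fun h => ha (by
    rw [h]; exact le_sup_right (a := J) (Ideal.mem_span_singleton_self a))

theorem aux_preserve [IsNoetherianRing R] (hE : Module.Injective R E)
    (h : (I →ₗ[R] E) →ₗ[R] (I →ₗ[R] E)) (J : Ideal R) (φ : I →ₗ[R] E)
    (hφ : ∀ x ∈ auxAnn R J, φ x = 0) : ∀ x ∈ auxAnn R J, h φ x = 0 := by
  obtain ⟨m, k, hk⟩ := Submodule.fg_iff_exists_fin_generating_family.1
    (IsNoetherian.noetherian J)
  let α : I →ₗ[R] (Fin m → I) := LinearMap.pi fun j => k j • LinearMap.id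
  have hkJ : ∀ j, k j ∈ J := fun j => by rw [← hk]; exact Submodule.subset_span ⟨j, rfl⟩
  obtain ⟨β, hβ⟩ := aux_factor R hE α φ (by
    intro x hx
    apply hφ
    have : J ≤ LinearMap.ker (LinearMap.toSpanSingleton R I x) := by
      rw [← hk, Submodule.span_le]
      rintro _ ⟨j, rfl⟩
      have := congrFun hx j
      simpa [α] using this
    intro r hr
    simpa using this hr)
  have hs : φ = ∑ j, k j • (β ∘ₗ LinearMap.single R (fun _ => I) j) := by
    ext x
    have h2 : α x = ∑ j, Pi.single j (k j • x) := by
      ext j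
      rw [Finset.sum_apply]
      simp [Pi.single_apply, α]
    rw [← hβ, h2, map_sum, LinearMap.sum_apply]
    refine Finset.sum_congr rfl fun j _ => ?_
    simp [Pi.single_smul]
  intro x hx
  rw [hs, map_sum, LinearMap.sum_apply]
  refine Finset.sum_eq_zero fun j _ => ?_
  rw [map_smul, LinearMap.smul_apply, ← map_smul, hx _ (hkJ j), map_zero]

theorem aux_preserve' [IsNoetherianRing R] (hE : Module.Injective R E)
    (h : (I →ₗ[R] E) →ₗ[R] (I →ₗ[R] E)) (J : Ideal R) (φ ψ : I →ₗ[R] E)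
    (hφ : ∀ x ∈ auxAnn R J, φ x = ψ x) : ∀ x ∈ auxAnn R J, h φ x = h ψ x := by
  intro x hx
  have := aux_preserve R hE h J (φ - ψ) (fun x hx => by simp [hφ x hx]) x hx
  rw [map_sub, LinearMap.sub_apply] at this
  exact sub_eq_zero.1 this

theorem aux_div (hE : Module.Injective R E) (J : Ideal R) (a : R) (φ : I →ₗ[R] E)
    (hφ : ∀ x ∈ auxAnn R J, a • x = 0 → φ x = 0) :
    ∃ β : I →ₗ[R] E, ∀ x ∈ auxAnn R J, β (a • x) = φ x := by
  obtain ⟨β, hβ⟩ := aux_factor R hE (a • (auxAnn R (I := I) J).subtype)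
    (φ ∘ₗ (auxAnn R (I := I) J).subtype) (fun x hx => hφ x.1 x.2 hx)
  exact ⟨β, fun x hx => hβ ⟨x, hx⟩⟩

theorem aux_mul (hI : Module.Injective R I) (J J' : Ideal R) (a : R)
    (hJ' : ∀ r, r * a ∈ J → r ∈ J') (y : I) (hy : y ∈ auxAnn R J') :
    ∃ x ∈ auxAnn R J, a • x = y := by
  obtain ⟨γ, hγ⟩ := aux_factor R hI (J.mkQ ∘ₗ LinearMap.toSpanSingleton R R a)
    (LinearMap.toSpanSingleton R I y) (fun r hr => by
      have : r * a ∈ J := (Submodule.Quotient.mk_eq_zero J).1 hr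
      exact hy r (hJ' r this))
  refine ⟨γ (J.mkQ 1), fun r hr => ?_, ?_⟩
  · rw [← map_smul, ← map_smul, smul_eq_mul, mul_one, (Submodule.Quotient.mk_eq_zero J).2 hr |>
      fun h => (show J.mkQ r = 0 from h), map_zero]
  · have := hγ 1
    rw [← map_smul, ← map_smul, smul_eq_mul, mul_one]
    simpa using! this

/-- The induction predicate. -/
def AuxP (h : (I →ₗ[R] E) →ₗ[R] (I →ₗ[R] E)) (J : Ideal R) : Prop :=
  (∀ φ : I →ₗ[R] E, (∀ x ∈ auxAnn R J, h φ x = 0) → ∀ x ∈ auxAnn R J, φ x = 0) ∧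
  (∀ φ : I →ₗ[R] E, ∃ ψ : I →ₗ[R] E, ∀ x ∈ auxAnn R J, h ψ x = φ x)

theorem aux_nonprime [IsNoetherianRing R] (hI : Module.Injective R I) (hE : Module.Injective R E)
    (h : (I →ₗ[R] E) →ₗ[R] (I →ₗ[R] E)) (J : Ideal R) (ih : ∀ J' > J, AuxP R h J')
    (a b : R) (ha : a ∉ J) (hb : b ∉ J) (hab : a * b ∈ J) : AuxP R h J := by
  obtain ⟨hA1, hA2⟩ := ih _ (aux_lt_sup R ha)
  let J' : Ideal R := Submodule.comap (LinearMap.toSpanSingleton R R a) J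
  have hJ' : ∀ r, r ∈ J' ↔ r * a ∈ J := fun r => by simp [J']
  have hlt : J < J' := by
    refine lt_of_le_of_ne (fun r hr => (hJ' r).2 (J.mul_mem_right _ hr)) fun h => hb ?_
    rw [h, hJ', mul_comm]; exact hab
  obtain ⟨hB1, hB2⟩ := ih _ hlt
  have hmem : ∀ x : I, x ∈ auxAnn R J → a • x ∈ auxAnn R J' := by
    intro x hx r hr
    rw [smul_smul]; exact hx _ ((hJ' r).1 hr)
  constructor
  · intro φ hφ
    have h1 := hA1 φ (fun x hx => hφ x (aux_ann_sup_left R hx))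
    obtain ⟨β, hβ⟩ := aux_div R hE J a φ (fun x hx hax => h1 x (aux_ann_sup R hx hax))
    have h2 := aux_preserve' R hE h J (a • β) φ (fun x hx => by
      rw [LinearMap.smul_apply, ← map_smul]; exact hβ x hx)
    have h3 := hB1 β (by
      intro y hy
      obtain ⟨x, hx, rfl⟩ := aux_mul R hI J J' a (fun r hr => (hJ' r).2 hr) y hy
      have := h2 x hx
      rw [hφ x hx, map_smul, LinearMap.smul_apply, ← map_smul] at this
      exact this)
    intro x hx
    rw [← hβ x hx]; exact h3 _ (hmem x hx)
  · intro φ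
    obtain ⟨ψ, hψ⟩ := hA2 φ
    obtain ⟨β, hβ⟩ := aux_div R hE J a (φ - h ψ) (fun x hx hax => by
      rw [LinearMap.sub_apply, hψ x (aux_ann_sup R hx hax), sub_self])
    obtain ⟨χ, hχ⟩ := hB2 β
    refine ⟨ψ + a • χ, fun x hx => ?_⟩
    rw [map_add, map_smul, LinearMap.add_apply, LinearMap.smul_apply, ← map_smul,
      hχ _ (hmem x hx), hβ x hx, LinearMap.sub_apply]
    abel

theorem aux_prime [IsNoetherianRing R] (hE : Module.Injective R E)
    (h : (I →ₗ[R] E) →ₗ[R] (I →ₗ[R] E)) (N : Submodule R I)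
    (hN : ∀ x : I, x ≠ 0 → ∃ r : R, r • x ≠ 0 ∧ r • x ∈ N)
    (hh : ∀ φ, ∀ x ∈ N, h φ x = φ x)
    (J : Ideal R) (hJ : J.IsPrime) (ih : ∀ J' > J, AuxP R h J') : AuxP R h J := by
  have hL : ∀ φ : I →ₗ[R] E, (∀ x ∈ auxAnn R J, ∀ r ∉ J, r • x = 0 → φ x = 0) →
      ∀ x ∈ auxAnn R J, h φ x = φ x := by
    intro φ hφ x hx
    by_cases hx0 : x = 0
    · simp [hx0]
    obtain ⟨r, hr0, hrN⟩ := hN x hx0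
    have hrJ : r ∉ J := fun hr => hr0 (hx r hr)
    obtain ⟨β, hβ⟩ := aux_div R hE J r φ (fun y hy hry => hφ y hy r hrJ hry)
    have h2 := aux_preserve' R hE h J (r • β) φ (fun x hx => by
      rw [LinearMap.smul_apply, ← map_smul]; exact hβ x hx) x hx
    rw [← h2, map_smul, LinearMap.smul_apply, ← map_smul, hh β _ hrN, hβ x hx]
  constructor
  · intro φ hφ x hx
    rw [← hL φ _ x hx, hφ x hx]
    intro y hy r hr hry
    exact (ih _ (aux_lt_sup R hr)).1 φ (fun z hz => hφ z (aux_ann_sup_left R hz)) y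
      (aux_ann_sup R hy hry)
  · intro φ
    have hex : ∀ r, ∃ ψ : I →ₗ[R] E, r ∉ J →
        ∀ x ∈ auxAnn R (J ⊔ Ideal.span {r}), h ψ x = φ x := by
      intro r
      by_cases hr : r ∈ J
      · exact ⟨0, fun h => absurd hr h⟩
      · obtain ⟨ψ, hψ⟩ := (ih _ (aux_lt_sup R hr)).2 φ
        exact ⟨ψ, fun _ => hψ⟩
    choose ψ hψ using hex
    have hmul : ∀ r s, r ∉ J → s ∉ J → r * s ∉ J := fun r s hr hs hrs =>
      (hJ.mem_or_mem hrs).elim hr hs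
    have hcomp : ∀ r s, r ∉ J → s ∉ J → ∀ x ∈ auxAnn R J, r • x = 0 →
        ψ r x = ψ (r * s) x := by
      intro r s hr hs x hx hrx
      have := (ih _ (aux_lt_sup R hr)).1 (ψ r - ψ (r * s)) (by
        intro y hy
        have hy2 : y ∈ auxAnn R (J ⊔ Ideal.span {r * s}) :=
          aux_ann_sup R (aux_ann_sup_left R hy) (by
            rw [mul_comm, mul_smul, aux_ann_sup_right R hy, smul_zero])
        rw [map_sub, LinearMap.sub_apply, hψ r hr y hy, hψ _ (hmul r s hr hs) y hy2, sub_self])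
        x (aux_ann_sup R hx hrx)
      rw [LinearMap.sub_apply] at this
      exact sub_eq_zero.1 this
    have hcomp2 : ∀ r s, r ∉ J → s ∉ J → ∀ x ∈ auxAnn R J, r • x = 0 → s • x = 0 →
        ψ r x = ψ s x := by
      intro r s hr hs x hx hrx hsx
      rw [hcomp r s hr hs x hx hrx, hcomp s r hs hr x hx hsx, mul_comm]
    let T : Submodule R I :=
      { carrier := {x | x ∈ auxAnn R J ∧ ∃ r, r ∉ J ∧ r • x = 0}
        add_mem' := by
          rintro x y ⟨hx, r, hr, hrx⟩ ⟨hy, s, hs, hsy⟩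
          refine ⟨add_mem hx hy, r * s, hmul r s hr hs, ?_⟩
          rw [smul_add, mul_smul r s y, hsy, mul_comm, mul_smul, hrx]; simp
        zero_mem' := ⟨zero_mem _, 1, fun h1 => hJ.ne_top ((Ideal.eq_top_iff_one J).2 h1), by simp⟩
        smul_mem' := by
          rintro c x ⟨hx, r, hr, hrx⟩
          exact ⟨Submodule.smul_mem _ _ hx, r, hr, by rw [smul_comm, hrx, smul_zero]⟩ }
    choose ρ hρ hρ0 using fun x : T => x.2.2
    let θ : T →ₗ[R] E :=
      { toFun := fun x => ψ (ρ x) x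
        map_add' := by
          intro x y
          have hx := hcomp (ρ x) (ρ y) (hρ x) (hρ y) x x.2.1 (hρ0 x)
          have hy := hcomp (ρ y) (ρ x) (hρ y) (hρ x) y y.2.1 (hρ0 y)
          have h0 : (ρ x * ρ y) • ((x + y : T) : I) = 0 := by
            rw [Submodule.coe_add, smul_add, mul_smul _ _ (y : I), hρ0 y, mul_comm, mul_smul,
              hρ0 x]
            simp
          have hxy := hcomp2 (ρ (x + y)) (ρ x * ρ y) (hρ _) (hmul _ _ (hρ x) (hρ y)) _
            (x + y).2.1 (hρ0 _) h0
          rw [hxy, hx, hy, mul_comm (ρ y), Submodule.coe_add, map_add]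
        map_smul' := by
          intro c x
          have h0 : ρ x • ((c • x : T) : I) = 0 := by
            rw [Submodule.coe_smul, smul_comm, hρ0 x, smul_zero]
          have hx := hcomp2 (ρ (c • x)) (ρ x) (hρ _) (hρ x) _ (c • x).2.1 (hρ0 _) h0
          rw [hx, Submodule.coe_smul, map_smul]; rfl }
    obtain ⟨ω, hω⟩ := hE.out T.subtype Subtype.val_injective θ
    have hT : ∀ x ∈ auxAnn R J, ∀ r ∉ J, r • x = 0 → h ω x = φ x := by
      intro x hx r hr hrx
      rw [← hψ r hr x (aux_ann_sup R hx hrx)]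
      refine aux_preserve' R hE h _ ω (ψ r) ?_ x (aux_ann_sup R hx hrx)
      intro y hy
      have hyJ := aux_ann_sup_left R hy
      have hry := aux_ann_sup_right R hy
      let y' : T := ⟨y, hyJ, r, hr, hry⟩
      have h1 : ω y = ψ (ρ y') y := hω y'
      rw [h1]
      exact hcomp2 _ _ (hρ y') hr y hyJ (hρ0 y') hry
    refine ⟨ω + (φ - h ω), fun x hx => ?_⟩
    rw [map_add, LinearMap.add_apply, hL (φ - h ω) _ x hx, LinearMap.sub_apply]
    · abel
    · intro y hy r hr hry
      rw [LinearMap.sub_apply, hT y hy r hr hry, sub_self]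

theorem aux_bij [IsNoetherianRing R] (hI : Module.Injective R I) (hE : Module.Injective R E)
    (h : (I →ₗ[R] E) →ₗ[R] (I →ₗ[R] E)) (N : Submodule R I)
    (hN : ∀ x : I, x ≠ 0 → ∃ r : R, r • x ≠ 0 ∧ r • x ∈ N)
    (hh : ∀ φ, ∀ x ∈ N, h φ x = φ x) : Function.Bijective h := by
  have key : ∀ J : Ideal R, AuxP R h J := by
    intro J
    induction J using IsNoetherian.induction with | hgt J ih =>
    by_cases hJ : Ideal.IsPrime J
    · exact aux_prime R hE h N hN hh J hJ ih
    · rcases Ideal.not_isPrime_iff.1 hJ with rfl | ⟨a, ha, b, hb, hab⟩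
      · have h0 : ∀ x ∈ auxAnn R (I := I) (⊤ : Ideal R), x = 0 := fun x hx => by
          simpa using hx 1 trivial
        exact ⟨fun φ _ x hx => by rw [h0 x hx, map_zero],
          fun φ => ⟨0, fun x hx => by rw [h0 x hx, map_zero, map_zero]⟩⟩
      · exact aux_nonprime R hI hE h J ih a b ha hb hab
  obtain ⟨k1, k2⟩ := key ⊥
  have hm : ∀ x : I, x ∈ auxAnn R (⊥ : Ideal R) := fun x r hr => by
    rw [(Submodule.mem_bot R).1 hr, zero_smul]
  constructor
  · rw [injective_iff_map_eq_zero]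
    intro φ hφ
    ext x
    exact k1 φ (fun x _ => by rw [hφ]; rfl) x (hm x)
  · intro φ
    obtain ⟨ψ, hψ⟩ := k2 φ
    exact ⟨ψ, LinearMap.ext fun x => hψ x (hm x)⟩

end

/-- Over a commutative Noetherian ring, if `i : M → I` is an injective
envelope then `Hom_R(i, E)` is a flat cover for every injective module `E`. -/
theorem dual_of_injectiveEnvelope_isFlatCover [IsNoetherianRing R]
    {M I : Type u} [AddCommGroup M] [AddCommGroup I] [Module R M] [Module R I]
    (i : M →ₗ[R] I) (hi : IsInjectiveEnvelope R i)
    (E : Type u) [AddCommGroup E] [Module R E] (hE : Module.Injective R E) :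
    IsFlatCover R (LinearMap.lcomp R E i) := by
  obtain ⟨hI, hinj, hess⟩ := hi
  refine ⟨⟨aux_flat R hI hE, ?_⟩, ?_⟩
  · intro F' _ _ hF g
    obtain ⟨k, hk⟩ := hE.out (i.lTensor F')
      (Module.Flat.lTensor_preserves_injective_linearMap i hinj) (TensorProduct.lift g)
    refine ⟨TensorProduct.curry k, ?_⟩
    ext y m
    simpa using hk (y ⊗ₜ[R] m)
  · intro h hh
    refine aux_bij R hI hE h (LinearMap.range i) ?_ ?_
    · intro x hx
      obtain ⟨y, hy, hy0⟩ := Submodule.exists_mem_ne_zero_of_ne_bot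
        (hess (Submodule.span R {x}) (by simpa using hx))
      obtain ⟨r, rfl⟩ := Submodule.mem_span_singleton.1 hy.1
      exact ⟨r, hy0, hy.2⟩
    · rintro φ _ ⟨m, rfl⟩
      exact LinearMap.congr_fun (LinearMap.congr_fun hh φ) m
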